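/- Suppose L is symmetric (L y y' = L y' y for all y, y'). If the Max-Margin loss S_M is consistent to L (Fisher consistent under some decoding), then the Restricted-Max-Margin loss S_RM is also consistent to L (Fisher consistent under some decoding). -/

import Mathlib

open Finset Set

variable {Y : Type*} [Fintype Y] [DecidableEq Y] [Nonempty Y]

/-- Probability simplex over `Y`. -/
def simplexSet (Y : Type*) [Fintype Y] : Set (Y → ℝ) :=
  {q | (∀ y, 0 ≤ q y) ∧ ∑ y, q y = 1}

/-- Bayes risk of the discrete loss `L`. -/
noncomputable def HL (L : Y → Y → ℝ) (q : Y → ℝ) : ℝ :=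
  ⨅ y : Y, ∑ y', L y y' * q y'

/-- Optimal-label set. -/
noncomputable def ystar (L : Y → Y → ℝ) (q : Y → ℝ) : Set Y :=
  {y | ∑ y', L y y' * q y' = HL L q}

/-- Prediction set of label `y`. -/
noncomputable def predSet (L : Y → Y → ℝ) (y : Y) : Set (Y → ℝ) :=
  {q ∈ simplexSet Y | y ∈ ystar L q}

/-- Max-Margin loss. -/
noncomputable def SM (L : Y → Y → ℝ) (v : Y → ℝ) (y : Y) : ℝ :=
  ⨆ y' : Y, (L y y' + v y' - v y)

/-- Bayes risk of the Max-Margin loss. -/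
noncomputable def HM (L : Y → Y → ℝ) (q : Y → ℝ) : ℝ :=
  ⨅ v : Y → ℝ, ∑ y, q y * SM L v y

/-- Conditional-risk minimizers of the Max-Margin loss. -/
noncomputable def vstarM (L : Y → Y → ℝ) (q : Y → ℝ) : Set (Y → ℝ) :=
  {v | ∑ y, q y * SM L v y = HM L q}

/-- Restricted-Max-Margin loss. -/
noncomputable def SRM (L : Y → Y → ℝ) (v : Y → ℝ) (y : Y) : ℝ :=
  sSup ((fun q => ∑ y', L y y' * q y' + ∑ z, v z * q z) '' predSet L y) - v y

/-- Bayes risk of the Restricted-Max-Margin loss. -/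
noncomputable def HRM (L : Y → Y → ℝ) (q : Y → ℝ) : ℝ :=
  ⨅ v : Y → ℝ, ∑ y, q y * SRM L v y

/-- Conditional-risk minimizers of the Restricted-Max-Margin loss. -/
noncomputable def vstarRM (L : Y → Y → ℝ) (q : Y → ℝ) : Set (Y → ℝ) :=
  {v | ∑ y, q y * SRM L v y = HRM L q}

/-- Max-Min-Margin loss. -/
noncomputable def SMM (L : Y → Y → ℝ) (v : Y → ℝ) (y : Y) : ℝ :=
  sSup ((fun q => (⨅ z : Y, ∑ y', L z y' * q y') + ∑ z, v z * q z) '' simplexSet Y) - v y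

/-- Bayes risk of the Max-Min-Margin loss. -/
noncomputable def HMM (L : Y → Y → ℝ) (q : Y → ℝ) : ℝ :=
  ⨅ v : Y → ℝ, ∑ y, q y * SMM L v y

/-- Transportation polytope `U(q, q)`. -/
def Upoly (q : Y → ℝ) : Set (Y → Y → ℝ) :=
  {Q | (∀ y y', 0 ≤ Q y y') ∧ (∀ y, ∑ y', Q y y' = q y) ∧ (∀ y', ∑ y, Q y y' = q y')}

/-- The constraint set `C_L`. -/
def CL (L : Y → Y → ℝ) : Set (Y → Y → ℝ) :=
  {Q | ∀ y z : Y, ∑ y', L y y' * Q y y' ≤ ∑ y', L z y' * Q y y'}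

/-!
Call `u` dual feasible if `L a b ≤ u a + u b` for all labels. For symmetric `L` the vector
`S_M(v, ·) / 2` is dual feasible, and conversely `-u` minimizes the Max-Margin risk at the midpoint
of `δ_a` and `δ_b` whenever `u a + u b = L a b`. Consistency of Max-Margin therefore hands each dual
feasible `u` one label `z` that is optimal at the midpoints of all its tight pairs. Two consequences
follow.

* Choosing `u a = 0` and `u b = L a b` forces `z = a`, and optimality of `a` at the midpoint of
  `δ_a` and `δ_b` is the triangle inequality for `L`.
* If `u` minimizes `⟨u, q⟩`, then a small step from `u` in the direction `u - L z` keeps it dual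
  feasible, so `H_L(q) ≤ ⟨L z, q⟩ ≤ ⟨u, q⟩`: every dual feasible vector dominates `H_L` on the
  simplex.

By the triangle inequality, `S_RM(v, ·)` is itself dual feasible, so its conditional risk is at
least `H_L`, with equality at `v = -L z` for `z` optimal. Finally, if a linear functional
dominates the concave function `H_L` on the simplex, then one label is optimal at every point where
they agree: otherwise each label fails at some such point, and the average of these points violates
the domination.
-/

section

variable {ι : Type*} {L : ι → ι → ℝ}

/-- For symmetric `L`, feasibility in the dual `min ⟨u, q⟩` of the transport problem of maximizing
`(∑ L a b * Q a b) / 2` over the couplings `Q` of `q` with itself. Minimizing the Max-Margin risk at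
`q` amounts to solving this dual. -/
def IsDualFeasible (L : ι → ι → ℝ) (u : ι → ℝ) : Prop :=
  ∀ a b, L a b ≤ u a + u b

theorem exists_nonneg_forall_le [Finite ι] (L : ι → ι → ℝ) : ∃ M, 0 ≤ M ∧ ∀ a b, L a b ≤ M := by
  obtain ⟨M, hM, hLM⟩ :=
    (Set.finite_range fun p : ι × ι => L p.1 p.2).bddAbove.exists_ge 0
  exact ⟨M, hM, fun a b => hLM _ ⟨(a, b), rfl⟩⟩

namespace IsDualFeasible

variable {u : ι → ℝ}

theorem nonneg (hdiag : ∀ y, 0 ≤ L y y) (hu : IsDualFeasible L u) : 0 ≤ u := fun y => by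
  rw [Pi.zero_apply]
  linarith [hu y y, hdiag y]

theorem inf_const {M : ℝ} (hdiag : ∀ y, 0 ≤ L y y) (hM : 0 ≤ M) (hLM : ∀ a b, L a b ≤ M)
    (hu : IsDualFeasible L u) : IsDualFeasible L (u ⊓ fun _ => M) := fun a b => by
  have ha : 0 ≤ u a := hu.nonneg hdiag a
  have hb : 0 ≤ u b := hu.nonneg hdiag b
  simp only [Pi.inf_apply, min_add, add_min, le_inf_iff]
  have h := hLM a b
  exact ⟨⟨hu a b, by linarith⟩, by linarith, by linarith⟩

theorem exists_pos_add_smul [Finite ι] {w : ι → ℝ} (hu : IsDualFeasible L u)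
    (hw : ∀ a b, u a + u b = L a b → 0 ≤ w a + w b) :
    ∃ t : ℝ, 0 < t ∧ IsDualFeasible L (u + t • w) := by
  have hsmall : ∀ᶠ t : ℝ in nhdsWithin 0 (Set.Ioi 0),
      ∀ a b, L a b ≤ u a + u b + t * (w a + w b) := by
    refine Filter.eventually_all.2 fun a => Filter.eventually_all.2 fun b => ?_
    rcases (hu a b).eq_or_lt with htight | hslack
    · filter_upwards [self_mem_nhdsWithin] with t ht
      exact htight.trans_le
        (le_add_of_nonneg_right (mul_nonneg (le_of_lt ht) (hw a b htight.symm)))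
    · have hcont : Continuous fun t : ℝ => u a + u b + t * (w a + w b) := by fun_prop
      have hlt : ∀ᶠ t in nhds (0 : ℝ), L a b < u a + u b + t * (w a + w b) :=
        hcont.continuousAt.eventually_const_lt (by simpa using hslack)
      exact (hlt.filter_mono nhdsWithin_le_nhds).mono fun _ => le_of_lt
  obtain ⟨t, ht, htpos⟩ := (hsmall.and self_mem_nhdsWithin).exists
  refine ⟨t, htpos, fun a b => (ht a b).trans_eq ?_⟩
  simp only [Pi.add_apply, Pi.smul_apply, smul_eq_mul]
  ring

end IsDualFeasible

theorem isClosed_setOf_isDualFeasible (L : ι → ι → ℝ) : IsClosed {u | IsDualFeasible L u} := by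
  simp only [IsDualFeasible, Set.ofPred_forall]
  exact isClosed_iInter fun a => isClosed_iInter fun b =>
    isClosed_le continuous_const (by fun_prop)

theorem exists_isDualFeasible_eq_zero_and_eq [Finite ι] (hnonneg : ∀ y y', 0 ≤ L y y')
    (hdiag : ∀ y, L y y = 0) (hsymm : ∀ y y', L y y' = L y' y) (a b : ι) :
    ∃ u, IsDualFeasible L u ∧ u a = 0 ∧ u b = L a b := by
  classical
  obtain ⟨M, hM, hLM⟩ := exists_nonneg_forall_le L
  refine ⟨fun y => if y = a then 0 else if y = b then L a b else M, fun x y => ?_, ?_, ?_⟩ <;>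
    grind

theorem le_SM [Finite ι] (L : ι → ι → ℝ) (v : ι → ℝ) (y y' : ι) :
    L y y' + v y' - v y ≤ SM L v y :=
  le_ciSup (f := fun y' => L y y' + v y' - v y) (Set.finite_range _).bddAbove y'

theorem le_SM_add_SM [Finite ι] (hsymm : ∀ y y', L y y' = L y' y) (v : ι → ℝ) (a b : ι) :
    2 * L a b ≤ SM L v a + SM L v b := by
  linarith [le_SM L v a b, le_SM L v b a, hsymm a b]

theorem SM_neg_le {u : ι → ℝ} (hu : IsDualFeasible L u) (y : ι) : SM L (-u) y ≤ 2 * u y := by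
  have : Nonempty ι := ⟨y⟩
  refine ciSup_le fun y' => ?_
  rw [Pi.neg_apply, Pi.neg_apply]
  linarith [hu y y']

variable [Fintype ι]

/-- Consistency to `L`, that is Fisher consistency under some decoding, of a surrogate loss given
through its set `vstar q` of conditional-risk minimizers at each `q`. -/
def IsConsistent (L : ι → ι → ℝ) (vstar : (ι → ℝ) → Set (ι → ℝ)) : Prop :=
  ∃ d : (ι → ℝ) → ι, ∀ q ∈ simplexSet ι, ∀ v ∈ vstar q, d v ∈ ystar L q

/-- The midpoint of the point masses at `a` and `b`, which is the point mass at `a` if `a = b`.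
These are the distributions at which consistency of the Max-Margin loss is exploited. -/
noncomputable def pairDist [DecidableEq ι] (a b : ι) : ι → ℝ :=
  midpoint ℝ (Pi.single a 1) (Pi.single b 1)

theorem dotProduct_pairDist [DecidableEq ι] (f : ι → ℝ) (a b : ι) :
    f ⬝ᵥ pairDist a b = (f a + f b) / 2 := by
  rw [pairDist, midpoint_eq_smul_add, dotProduct_smul, dotProduct_add, dotProduct_single_one,
    dotProduct_single_one, smul_eq_mul, invOf_eq_inv, inv_mul_eq_div]

theorem pairDist_mem_simplexSet [DecidableEq ι] (a b : ι) : pairDist a b ∈ simplexSet ι :=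
  (convex_stdSimplex ℝ ι).midpoint_mem (single_mem_stdSimplex ℝ a) (single_mem_stdSimplex ℝ b)

theorem HL_le_dotProduct (L : ι → ι → ℝ) (q : ι → ℝ) (y : ι) : HL L q ≤ L y ⬝ᵥ q :=
  ciInf_le (Set.finite_range _).bddBelow y

theorem exists_dotProduct_eq_HL [Nonempty ι] (L : ι → ι → ℝ) (q : ι → ℝ) :
    ∃ y, L y ⬝ᵥ q = HL L q :=
  exists_eq_ciInf_of_finite

theorem mem_ystar_iff {q : ι → ℝ} {y : ι} : y ∈ ystar L q ↔ ∀ w, L y ⬝ᵥ q ≤ L w ⬝ᵥ q := by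
  have : Nonempty ι := ⟨y⟩
  exact ⟨fun h w => (show L y ⬝ᵥ q = HL L q from h).trans_le (HL_le_dotProduct L q w),
    fun h => le_antisymm (le_ciInf h) (HL_le_dotProduct L q y)⟩

theorem mem_ystar_pairDist_iff [DecidableEq ι] {a b y : ι} :
    y ∈ ystar L (pairDist a b) ↔ ∀ w, L y a + L y b ≤ L w a + L w b := by
  simp only [mem_ystar_iff, dotProduct_pairDist, div_le_div_iff_of_pos_right (zero_lt_two' ℝ)]

theorem exists_forall_mem_ystar_of_HL_le [Nonempty ι] {g : ι → ℝ}
    (hg : ∀ q ∈ simplexSet ι, HL L q ≤ g ⬝ᵥ q) :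
    ∃ z, ∀ q ∈ simplexSet ι, g ⬝ᵥ q = HL L q → z ∈ ystar L q := by
  by_contra! hbad
  choose p hp hgp hnot using hbad
  have hcard : 0 < (Fintype.card ι : ℝ)⁻¹ := inv_pos.2 (Nat.cast_pos.2 Fintype.card_pos)
  let r : ι → ℝ := ∑ i, (Fintype.card ι : ℝ)⁻¹ • p i
  have hr : r ∈ simplexSet ι :=
    (convex_stdSimplex ℝ ι).sum_mem (fun _ _ => hcard.le) (by simp) fun i _ => hp i
  have dotProduct_r (f : ι → ℝ) : f ⬝ᵥ r = ∑ i, (Fintype.card ι : ℝ)⁻¹ * (f ⬝ᵥ p i) := by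
    simp only [r, dotProduct_sum, dotProduct_smul, smul_eq_mul]
  obtain ⟨z, hz⟩ := exists_dotProduct_eq_HL L r
  have hle (i : ι) : g ⬝ᵥ p i ≤ L z ⬝ᵥ p i := (hgp i).trans_le (HL_le_dotProduct L (p i) z)
  have hlt : g ⬝ᵥ p z < L z ⬝ᵥ p z :=
    (hle z).lt_of_ne fun h => hnot z (h.symm.trans (hgp z))
  have : g ⬝ᵥ r < L z ⬝ᵥ r := by
    rw [dotProduct_r, dotProduct_r]
    exact Finset.sum_lt_sum (fun i _ => mul_le_mul_of_nonneg_left (hle i) hcard.le)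
      ⟨z, Finset.mem_univ z, mul_lt_mul_of_pos_left hlt hcard⟩
  exact this.not_ge (hz.trans_le (hg r hr))

theorem exists_isMinOn_isDualFeasible (hdiag : ∀ y, 0 ≤ L y y) {q : ι → ℝ} (hq : 0 ≤ q) :
    ∃ u, IsDualFeasible L u ∧ IsMinOn (· ⬝ᵥ q) {u | IsDualFeasible L u} u := by
  obtain ⟨M, hM, hLM⟩ := exists_nonneg_forall_le L
  have hne : (Set.Icc 0 (fun _ => M) ∩ {u | IsDualFeasible L u}).Nonempty :=
    ⟨fun _ => M, ⟨fun _ => hM, le_rfl⟩, fun a b => by linarith [hLM a b]⟩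
  obtain ⟨u, hu, hmin⟩ :=
    (isCompact_Icc.inter_right (isClosed_setOf_isDualFeasible L)).exists_isMinOn hne
      (f := (· ⬝ᵥ q)) (by fun_prop)
  refine ⟨u, hu.2, fun u' hu' => ?_⟩
  have htrunc : u' ⊓ (fun _ => M) ∈ Set.Icc 0 (fun _ => M) ∩ {u | IsDualFeasible L u} :=
    ⟨⟨le_inf (hu'.nonneg hdiag) fun _ => hM, inf_le_right⟩, hu'.inf_const hdiag hM hLM⟩
  exact (hmin htrunc).trans (dotProduct_le_dotProduct_of_nonneg_right inf_le_left hq)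

theorem dotProduct_nonneg_of_isMinOn_isDualFeasible {q u w : ι → ℝ} (hu : IsDualFeasible L u)
    (hmin : IsMinOn (· ⬝ᵥ q) {u | IsDualFeasible L u} u)
    (hw : ∀ a b, u a + u b = L a b → 0 ≤ w a + w b) : 0 ≤ w ⬝ᵥ q := by
  obtain ⟨t, ht, hut⟩ := hu.exists_pos_add_smul hw
  have hle : u ⬝ᵥ q ≤ (u + t • w) ⬝ᵥ q := hmin hut
  rw [add_dotProduct, smul_dotProduct, smul_eq_mul] at hle
  exact nonneg_of_mul_nonneg_right (le_add_iff_nonneg_right _ |>.1 hle) ht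

theorem mem_vstarM_of_forall_le {q v : ι → ℝ}
    (h : ∀ v', SM L v ⬝ᵥ q ≤ SM L v' ⬝ᵥ q) : v ∈ vstarM L q := by
  simp only [dotProduct_comm _ q] at h
  exact (IsLeast.csInf_eq (s := Set.range fun v' => q ⬝ᵥ SM L v')
    ⟨Set.mem_range_self v, Set.forall_mem_range.2 h⟩).symm

theorem neg_mem_vstarM_pairDist [DecidableEq ι] (hsymm : ∀ y y', L y y' = L y' y) {u : ι → ℝ}
    (hu : IsDualFeasible L u) {a b : ι} (hab : u a + u b = L a b) :
    -u ∈ vstarM L (pairDist a b) :=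
  mem_vstarM_of_forall_le fun v => by
    rw [dotProduct_pairDist, dotProduct_pairDist]
    linarith [SM_neg_le hu a, SM_neg_le hu b, le_SM_add_SM hsymm v a b]

theorem le_SRM {q : ι → ℝ} {y : ι} (v : ι → ℝ) (hq : q ∈ predSet L y) :
    L y ⬝ᵥ q + v ⬝ᵥ q - v y ≤ SRM L v y := by
  have hcont : Continuous fun p : ι → ℝ => L y ⬝ᵥ p + v ⬝ᵥ p := by fun_prop
  have hbdd : BddAbove ((fun p => L y ⬝ᵥ p + v ⬝ᵥ p) '' predSet L y) :=
    ((isCompact_stdSimplex ℝ ι).image hcont).bddAbove.mono (Set.image_mono fun _ hp => hp.1)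
  exact sub_le_sub_right (le_csSup hbdd (Set.mem_image_of_mem _ hq)) _

theorem SRM_neg_le (L : ι → ι → ℝ) (z : ι) : SRM L (-L z) ≤ L z := fun y => by
  have : sSup ((fun q => L y ⬝ᵥ q + -L z ⬝ᵥ q) '' predSet L y) ≤ 0 := by
    refine Real.sSup_nonpos (Set.forall_mem_image.2 fun q hq => ?_)
    rw [neg_dotProduct, ← sub_eq_add_neg, sub_nonpos]
    exact mem_ystar_iff.1 hq.2 z
  exact (sub_le_sub_right this _).trans_eq (by rw [Pi.neg_apply, zero_sub, neg_neg])

theorem isDualFeasible_SRM (hdiag : ∀ y, L y y = 0) (hsymm : ∀ y y', L y y' = L y' y)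
    (htri : ∀ a b w, L a b ≤ L w a + L w b) (v : ι → ℝ) : IsDualFeasible L (SRM L v) := by
  classical
  intro a b
  have ha : pairDist a b ∈ predSet L a := by
    refine ⟨pairDist_mem_simplexSet a b, mem_ystar_pairDist_iff.2 fun w => ?_⟩
    linarith [hdiag a, htri a b w]
  have hb : pairDist a b ∈ predSet L b := by
    refine ⟨pairDist_mem_simplexSet a b, mem_ystar_pairDist_iff.2 fun w => ?_⟩
    linarith [hdiag b, hsymm a b, htri a b w]
  have hla := le_SRM v ha
  have hlb := le_SRM v hb
  simp only [dotProduct_pairDist] at hla hlb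
  linarith [hdiag a, hdiag b, hsymm a b]

theorem HRM_eq_HL [Nonempty ι] {q : ι → ℝ} (hq : 0 ≤ q) (h : ∀ v, HL L q ≤ SRM L v ⬝ᵥ q) :
    HRM L q = HL L q := by
  obtain ⟨z, hz⟩ := exists_dotProduct_eq_HL L q
  have hrisk : SRM L (-L z) ⬝ᵥ q = HL L q :=
    le_antisymm ((dotProduct_le_dotProduct_of_nonneg_right (SRM_neg_le L z) hq).trans_eq hz) (h _)
  simp only [dotProduct_comm _ q] at h hrisk
  exact IsLeast.csInf_eq ⟨⟨_, hrisk⟩, Set.forall_mem_range.2 h⟩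

theorem isConsistent_vstarRM_of_HL_le [Nonempty ι]
    (h : ∀ q ∈ simplexSet ι, ∀ v, HL L q ≤ SRM L v ⬝ᵥ q) : IsConsistent L (vstarRM L) := by
  choose d hd using fun v => exists_forall_mem_ystar_of_HL_le fun q hq => h q hq v
  refine ⟨d, fun q hq v hv => hd v q hq ?_⟩
  rw [dotProduct_comm, ← HRM_eq_HL hq.1 (h q hq)]
  exact hv

namespace IsConsistent

theorem exists_forall_mem_ystar_pairDist [DecidableEq ι] (hM : IsConsistent L (vstarM L))
    (hsymm : ∀ y y', L y y' = L y' y) {u : ι → ℝ} (hu : IsDualFeasible L u) :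
    ∃ z, ∀ a b, u a + u b = L a b → z ∈ ystar L (pairDist a b) := by
  obtain ⟨d, hd⟩ := hM
  exact ⟨d (-u), fun a b hab =>
    hd _ (pairDist_mem_simplexSet a b) _ (neg_mem_vstarM_pairDist hsymm hu hab)⟩

theorem triangle (hM : IsConsistent L (vstarM L)) (hnonneg : ∀ y y', 0 ≤ L y y')
    (hzero : ∀ y y', L y y' = 0 ↔ y = y') (hsymm : ∀ y y', L y y' = L y' y) (a b w : ι) :
    L a b ≤ L w a + L w b := by
  classical
  have hdiag (y : ι) : L y y = 0 := (hzero y y).2 rfl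
  obtain ⟨u, hu, hua, hub⟩ := exists_isDualFeasible_eq_zero_and_eq hnonneg hdiag hsymm a b
  obtain ⟨z, hz⟩ := hM.exists_forall_mem_ystar_pairDist hsymm hu
  have hza : L z a + L z a ≤ L a a + L a a :=
    mem_ystar_pairDist_iff.1 (hz a a (by rw [hua, hdiag, add_zero])) a
  obtain rfl : z = a := (hzero z a).1 (by linarith [hdiag a, hnonneg z a])
  have hzb : L z z + L z b ≤ L w z + L w b :=
    mem_ystar_pairDist_iff.1 (hz z b (by rw [hua, hub, zero_add])) w
  rwa [hdiag, zero_add] at hzb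

theorem HL_le_dotProduct_of_isDualFeasible (hM : IsConsistent L (vstarM L))
    (hdiag : ∀ y, L y y = 0) (hsymm : ∀ y y', L y y' = L y' y) {q u : ι → ℝ} (hq : 0 ≤ q)
    (hu : IsDualFeasible L u) : HL L q ≤ u ⬝ᵥ q := by
  classical
  obtain ⟨u₀, hu₀, hmin⟩ := exists_isMinOn_isDualFeasible (fun y => (hdiag y).ge) hq
  obtain ⟨z, hz⟩ := hM.exists_forall_mem_ystar_pairDist hsymm hu₀
  have htight (a b : ι) (hab : u₀ a + u₀ b = L a b) : 0 ≤ (u₀ - L z) a + (u₀ - L z) b := by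
    have hza : L z a + L z b ≤ L a a + L a b := mem_ystar_pairDist_iff.1 (hz a b hab) a
    rw [Pi.sub_apply, Pi.sub_apply]
    linarith [hdiag a]
  have hdir := dotProduct_nonneg_of_isMinOn_isDualFeasible hu₀ hmin htight
  rw [sub_dotProduct, sub_nonneg] at hdir
  calc HL L q ≤ L z ⬝ᵥ q := HL_le_dotProduct L q z
    _ ≤ u₀ ⬝ᵥ q := hdir
    _ ≤ u ⬝ᵥ q := hmin hu

end IsConsistent

end

theorem stmt5 (Y : Type*) [Fintype Y] [DecidableEq Y] [Nonempty Y] (L : Y → Y → ℝ)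
    (hcard : 2 ≤ Fintype.card Y)
    (hnonneg : ∀ y y', 0 ≤ L y y')
    (hzero : ∀ y y', L y y' = 0 ↔ y = y')
    (hsymm : ∀ y y', L y y' = L y' y)
    (hconsM : ∃ d : (Y → ℝ) → Y, ∀ q ∈ simplexSet Y, ∀ v ∈ vstarM L q, d v ∈ ystar L q) :
    ∃ d : (Y → ℝ) → Y, ∀ q ∈ simplexSet Y, ∀ v ∈ vstarRM L q, d v ∈ ystar L q := by
  have hM : IsConsistent L (vstarM L) := hconsM
  have hdiag (y : Y) : L y y = 0 := (hzero y y).2 rfl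
  have htri := hM.triangle hnonneg hzero hsymm
  exact isConsistent_vstarRM_of_HL_le fun q hq v =>
    hM.HL_le_dotProduct_of_isDualFeasible hdiag hsymm hq.1 (isDualFeasible_SRM hdiag hsymm htri v)
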